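/- Let n ≥ 2. For every transposition σ in S_n and every x ∈ S_n, one has c(σ, x) + c(σ, σ·x) = 1 in Z/2Z. (This is the algebraic form of the vertical- and horizontal-annulus rules (V) and (H) for the induced sign assignment.) -/

import Mathlib

open Equiv
open scoped Classical

/-- Generator `z` as an element of the free group. -/
def zF (n : ℕ) : FreeGroup (Fin (n-1) ⊕ Unit) := FreeGroup.of (Sum.inr ())

/-- Generator `τ̃ᵢ` as an element of the free group. -/
def tF (n : ℕ) (i : Fin (n-1)) : FreeGroup (Fin (n-1) ⊕ Unit) := FreeGroup.of (Sum.inl i)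

/-- Relations of the spin extension of the symmetric group. -/
def spinRels (n : ℕ) : Set (FreeGroup (Fin (n-1) ⊕ Unit)) :=
  {zF n * zF n} ∪
  {w | ∃ i : Fin (n-1), w = zF n * tF n i * (tF n i * zF n)⁻¹} ∪
  {w | ∃ i : Fin (n-1), w = tF n i * tF n i * (zF n)⁻¹} ∪
  {w | ∃ i j : Fin (n-1), 1 < |(i : ℤ) - (j : ℤ)| ∧ w = tF n i * tF n j * (zF n * tF n j * tF n i)⁻¹} ∪
  {w | ∃ i j : Fin (n-1), (j : ℕ) = (i : ℕ) + 1 ∧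
        w = tF n i * tF n j * tF n i * (tF n j * tF n i * tF n j)⁻¹}

/-- The spin extension `S̃ₙ` of the symmetric group, as a presented group. -/
abbrev SpinSym (n : ℕ) := PresentedGroup (spinRels n)

/-- The central element `z` of `S̃ₙ`. -/
def zt (n : ℕ) : SpinSym n := PresentedGroup.of (Sum.inr ())

/-- The generator `τ̃ᵢ` of `S̃ₙ`. -/
def tt (n : ℕ) (i : Fin (n-1)) : SpinSym n := PresentedGroup.of (Sum.inl i)

/-- `i` as an element of `Fin n`. -/
def finL (n : ℕ) (i : Fin (n-1)) : Fin n := ⟨i, by have := i.2; omega⟩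

/-- `i+1` as an element of `Fin n`. -/
def finR (n : ℕ) (i : Fin (n-1)) : Fin n := ⟨(i : ℕ) + 1, by have := i.2; omega⟩

/-- `τ̃ₖ` for a natural number index, `1` out of range. -/
def ttN (n : ℕ) (k : ℕ) : SpinSym n := if h : k < n - 1 then tt n ⟨k, h⟩ else 1

/-- For `i ≤ j`, the word `τ̃ᵢ·τ̃ᵢ₊₁⋯τ̃ⱼ₋₂·τ̃ⱼ₋₁·τ̃ⱼ₋₂⋯τ̃ᵢ₊₁·τ̃ᵢ` (equal to `1` when `i = j`). -/
def ttilCore (n i j : ℕ) : SpinSym n :=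
  (((List.range' i (j - i)) ++ (List.range' i (j - 1 - i)).reverse).map (ttN n)).prod

/-- The lifted transpositions `τ̃_{i,j}`, with `τ̃_{j,i} = z·τ̃_{i,j}` for `i < j`,
and `τ̃_{k,k} = 1`. -/
def ttil (n i j : ℕ) : SpinSym n := if j < i then zt n * ttilCore n j i else ttilCore n i j

/-- `i` is the sequence of indices of a factorization of `x` as a product of
transpositions `t_{i_0,0} ⋯ t_{i_{n-1},n-1}` with `i_k ≤ k`. -/
def IsFactorization (n : ℕ) (x : Equiv.Perm (Fin n)) (i : Fin n → Fin n) : Prop :=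
  (∀ k, i k ≤ k) ∧ x = ((List.finRange n).map (fun k => Equiv.swap (i k) k)).prod

/-- The section `s : Sₙ → S̃ₙ`, defined from the unique factorization
`x = t_{i_0,0} ⋯ t_{i_{n-1},n-1}` by `s x = τ̃_{i_0,0} ⋯ τ̃_{i_{n-1},n-1}`. -/
noncomputable def sec (n : ℕ) (x : Equiv.Perm (Fin n)) : SpinSym n :=
  if h : ∃ i, IsFactorization n x i then
    ((List.finRange n).map (fun k => ttil n (h.choose k).val k.val)).prod
  else 1

/-- The `2`-cocycle `c : Sₙ × Sₙ → ℤ/2ℤ` defined by `s(x)·s(y) = z^{c(x,y)}·s(x·y)`. -/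
noncomputable def coc (n : ℕ) (x y : Equiv.Perm (Fin n)) : ZMod 2 :=
  if sec n x * sec n y = sec n (x * y) then 0 else 1

/-! Let `c = c(σ, x)` and `c' = c(σ, σ x)`. Multiplying `s(σ) s(x) = z ^ c s(σ x)` on the left by
`s(σ)` gives `s(σ)² s(x) = z ^ (c + c') s(x)`, so the rule says that `s(σ)² = z` and that `z` has
order exactly two. Up to a power of `z`, `s(σ)` is the palindrome `τ̃_{i,j}`, whose square collapses
to a single `τ̃ₖ² = z`. That `z ≠ 1` is seen in a Clifford algebra, where vectors with the Gram
matrix of the simple roots satisfy the relations of `S̃ₙ` with `z = -1`. That `s(x) s(y)` is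
`s(x y)` up to a power of `z` is the exactness of `⟨z⟩ → S̃ₙ → Sₙ`, a coset enumeration. -/

/-! ### Spin families -/

theorem ttN_of_lt {n k : ℕ} (h : k < n - 1) : ttN n k = tt n ⟨k, h⟩ := dif_pos h

/-- The defining relations of the spin extension, for the elements `t 0, …, t (m - 1)` of a monoid;
the values of `t` from `m` on are junk. For `z = 1` they are the Coxeter relations of `Sₘ₊₁`. -/
structure IsSpinFamily {M : Type*} [Monoid M] (t : ℕ → M) (z : M) (m : ℕ) : Prop where
  z_mul_self : z * z = 1
  mul_self : ∀ i < m, t i * t i = z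
  anticomm : ∀ i j, i + 1 < j → j < m → t i * t j = z * t j * t i
  braid : ∀ i, i + 1 < m → t i * t (i + 1) * t i = t (i + 1) * t i * t (i + 1)

namespace IsSpinFamily

section Monoid

variable {M : Type*} [Monoid M] {t : ℕ → M} {z : M} {m : ℕ}

theorem mono (h : IsSpinFamily t z m) {k : ℕ} (hk : k ≤ m) : IsSpinFamily t z k where
  z_mul_self := h.z_mul_self
  mul_self i hi := h.mul_self i (by omega)
  anticomm i j hij hj := h.anticomm i j hij (by omega)
  braid i hi := h.braid i (by omega)

theorem commute_z (h : IsSpinFamily t z m) {i : ℕ} (hi : i < m) : Commute z (t i) := by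
  rw [← h.mul_self i hi]
  exact (Commute.refl _).mul_left (Commute.refl _)

theorem anticomm' (h : IsSpinFamily t z m) {i j : ℕ} (hij : i + 1 < j) (hj : j < m) :
    t j * t i = z * t i * t j := by
  rw [mul_assoc, h.anticomm i j hij hj, ← mul_assoc, ← mul_assoc, h.z_mul_self, one_mul]

/-- The images in `Mˣ` of the generators of `S̃ₙ` under `IsSpinFamily.lift`. -/
def unitsGen {n : ℕ} (h : IsSpinFamily t z (n - 1)) : Fin (n - 1) ⊕ Unit → Mˣ
  | .inl i =>
    { val := t i
      inv := z * t i
      val_inv := by rw [← (h.commute_z i.2).left_comm, h.mul_self i i.2, h.z_mul_self]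
      inv_val := by rw [mul_assoc, h.mul_self i i.2, h.z_mul_self] }
  | .inr _ => ⟨z, z, h.z_mul_self, h.z_mul_self⟩

theorem lift_unitsGen_eq_one {n : ℕ} (h : IsSpinFamily t z (n - 1)) :
    ∀ r ∈ spinRels n, FreeGroup.lift h.unitsGen r = 1 := by
  rintro r ((((rfl | ⟨i, rfl⟩) | ⟨i, rfl⟩) | ⟨i, j, hij, rfl⟩) | ⟨i, j, hij, rfl⟩)
  all_goals simp only [zF, tF, map_mul, map_inv, FreeGroup.lift_apply_of, mul_inv_eq_one]
  all_goals refine Units.ext ?_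
  all_goals simp only [unitsGen, Units.val_mul, Units.val_one]
  · exact h.z_mul_self
  · exact h.commute_z i.2
  · exact h.mul_self i i.2
  · rcases lt_abs.1 hij with hij | hij
    · exact h.anticomm' (by omega) i.2
    · exact h.anticomm i j (by omega) j.2
  · rw [hij]
    exact h.braid i (by omega)

/-- The universal property of `S̃ₙ`: a spin family `t 0, …, t (n - 2)` in a monoid is the image of
`τ̃₀, …, τ̃ₙ₋₂` under a homomorphism. -/
def lift {n : ℕ} (h : IsSpinFamily t z (n - 1)) : SpinSym n →* M :=
  (Units.coeHom M).comp (PresentedGroup.toGroup h.lift_unitsGen_eq_one)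

theorem lift_zt {n : ℕ} (h : IsSpinFamily t z (n - 1)) : h.lift (zt n) = z :=
  congrArg Units.val (PresentedGroup.toGroup.of h.lift_unitsGen_eq_one (x := .inr ()))

theorem lift_ttN {n : ℕ} (h : IsSpinFamily t z (n - 1)) {k : ℕ} (hk : k < n - 1) :
    h.lift (ttN n k) = t k := by
  rw [ttN_of_lt hk]
  exact congrArg Units.val (PresentedGroup.toGroup.of h.lift_unitsGen_eq_one (x := .inl ⟨k, hk⟩))

end Monoid

end IsSpinFamily

theorem mem_of_zt_mem_of_ttN_mem {n : ℕ} {H : Subgroup (SpinSym n)} (hz : zt n ∈ H)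
    (ht : ∀ k < n - 1, ttN n k ∈ H) (g : SpinSym n) : g ∈ H := by
  refine PresentedGroup.generated_by _ _ (fun x => ?_) g
  rcases x with i | _
  · have hi := ht i i.2
    rwa [ttN_of_lt i.2] at hi
  · exact hz

theorem isSpinFamily_ttN (n : ℕ) : IsSpinFamily (ttN n) (zt n) (n - 1) where
  z_mul_self := PresentedGroup.one_of_mem (rels := spinRels n) (x := zF n * zF n)
    (Or.inl <| Or.inl <| Or.inl <| Or.inl rfl)
  mul_self i hi := by
    rw [ttN_of_lt hi]
    exact PresentedGroup.mk_eq_mk_of_mul_inv_mem (rels := spinRels n)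
      (x := tF n ⟨i, hi⟩ * tF n ⟨i, hi⟩) (y := zF n) (Or.inl <| Or.inl <| Or.inr ⟨_, rfl⟩)
  anticomm i j hij hj := by
    have hi : i < n - 1 := by omega
    rw [ttN_of_lt hi, ttN_of_lt hj]
    exact PresentedGroup.mk_eq_mk_of_mul_inv_mem (rels := spinRels n)
      (x := tF n ⟨i, hi⟩ * tF n ⟨j, hj⟩) (y := zF n * tF n ⟨j, hj⟩ * tF n ⟨i, hi⟩)
      (Or.inl <| Or.inr ⟨_, _, lt_abs.2 <| Or.inr <| by push_cast; omega, rfl⟩)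
  braid i hi := by
    have hi' : i < n - 1 := by omega
    rw [ttN_of_lt hi', ttN_of_lt hi]
    exact PresentedGroup.mk_eq_mk_of_mul_inv_mem (rels := spinRels n)
      (x := tF n ⟨i, hi'⟩ * tF n ⟨i + 1, hi⟩ * tF n ⟨i, hi'⟩)
      (y := tF n ⟨i + 1, hi⟩ * tF n ⟨i, hi'⟩ * tF n ⟨i + 1, hi⟩) (Or.inr ⟨_, _, rfl, rfl⟩)

theorem commute_zt (n : ℕ) (g : SpinSym n) : Commute (zt n) g := by
  refine (Subgroup.mem_centralizer_singleton_iff.1 (mem_of_zt_mem_of_ttN_mem ?_ ?_ g)).symm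
  · exact Subgroup.mem_centralizer_singleton_iff.2 rfl
  · exact fun k hk =>
      Subgroup.mem_centralizer_singleton_iff.2 ((isSpinFamily_ttN n).commute_z hk).symm.eq

/-! ### The central element has order two -/

theorem mul_mul_eq_add_of_mul_self_eq_neg_one {R : Type*} [Ring R] {a b : R} (ha : a * a = -1)
    (hab : a * b + b * a = 1) : a * b * a = a + b := by
  rw [mul_assoc, eq_sub_of_add_eq' hab, mul_sub, ← mul_assoc, ha, mul_one, neg_one_mul,
    sub_neg_eq_add]

theorem isSpinFamily_neg_one {R : Type*} [Ring R] {a : ℕ → R} (hsq : ∀ i, a i * a i = -1)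
    (hfar : ∀ i j, i + 1 < j → a i * a j + a j * a i = 0)
    (hadj : ∀ i, a i * a (i + 1) + a (i + 1) * a i = 1) (m : ℕ) : IsSpinFamily a (-1) m where
  z_mul_self := by rw [neg_one_mul, neg_neg]
  mul_self i _ := hsq i
  anticomm i j hij _ := by
    rw [neg_one_mul, neg_mul]
    exact eq_neg_of_add_eq_zero_left (hfar i j hij)
  braid i _ := by
    rw [mul_mul_eq_add_of_mul_self_eq_neg_one (hsq i) (hadj i),
      mul_mul_eq_add_of_mul_self_eq_neg_one (hsq (i + 1)) (by rw [add_comm, hadj]), add_comm]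

/-- The bilinear form with `B(eᵢ, eᵢ) = -1`, `B(eᵢ, eᵢ₊₁) = 1` and all other values zero. Its
symmetrization is minus the Cartan matrix of type `A`. -/
noncomputable def rootBilin : LinearMap.BilinForm ℚ (ℕ →₀ ℚ) :=
  Finsupp.linearCombination ℚ fun i => Finsupp.linearCombination ℚ fun j =>
    if i = j then -1 else if i + 1 = j then 1 else 0

theorem rootBilin_single (i j : ℕ) :
    rootBilin (Finsupp.single i 1) (Finsupp.single j 1) =
      if i = j then -1 else if i + 1 = j then 1 else 0 := by
  simp [rootBilin, Finsupp.linearCombination_single]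

/-- The simple root `eᵢ` in the Clifford algebra of `v ↦ B(v, v)`. -/
noncomputable def cliffordRoot (i : ℕ) : CliffordAlgebra rootBilin.toQuadraticMap :=
  CliffordAlgebra.ι _ (Finsupp.single i 1)

theorem isSpinFamily_cliffordRoot (m : ℕ) : IsSpinFamily cliffordRoot (-1) m := by
  have hadd (i j : ℕ) : cliffordRoot i * cliffordRoot j + cliffordRoot j * cliffordRoot i =
      algebraMap ℚ _ (rootBilin (Finsupp.single i 1) (Finsupp.single j 1) +
        rootBilin (Finsupp.single j 1) (Finsupp.single i 1)) := by
    rw [cliffordRoot, cliffordRoot, CliffordAlgebra.ι_mul_ι_add_swap,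
      LinearMap.BilinMap.polar_toQuadraticMap]
  refine isSpinFamily_neg_one (fun i => ?_) (fun i j hij => ?_) (fun i => ?_) m
  · rw [cliffordRoot, CliffordAlgebra.ι_sq_scalar, LinearMap.BilinMap.toQuadraticMap_apply,
      rootBilin_single, if_pos rfl, map_neg, map_one]
  · rw [hadd, rootBilin_single, rootBilin_single, if_neg (by omega), if_neg (by omega),
      if_neg (by omega), if_neg (by omega), add_zero, map_zero]
  · rw [hadd, rootBilin_single, rootBilin_single, if_neg (by omega), if_pos rfl,
      if_neg (by omega), if_neg (by omega), add_zero, map_one]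

theorem zt_ne_one (n : ℕ) : zt n ≠ 1 := by
  have : Invertible (2 : ℚ) := invertibleOfNonzero two_ne_zero
  have : CharZero (CliffordAlgebra rootBilin.toQuadraticMap) := algebraRat.charZero _
  intro hz
  have h := (isSpinFamily_cliffordRoot (n - 1)).lift_zt
  rw [hz, map_one] at h
  norm_num at h

theorem orderOf_zt (n : ℕ) : orderOf (zt n) = 2 :=
  orderOf_eq_prime (by rw [pow_two, (isSpinFamily_ttN n).z_mul_self]) (zt_ne_one n)

/-! ### The kernel of the projection to permutations -/

/-- The descending product `t (m - 1) * ⋯ * t j`. -/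
def descProd {M : Type*} [Monoid M] (t : ℕ → M) (m j : ℕ) : M :=
  ((List.Ico j m).reverse.map t).prod

theorem descProd_self {M : Type*} [Monoid M] (t : ℕ → M) (m : ℕ) : descProd t m m = 1 := by
  simp [descProd]

theorem descProd_of_lt {M : Type*} [Monoid M] (t : ℕ → M) {m j : ℕ} (hj : j < m) :
    descProd t m j = descProd t m (j + 1) * t j := by
  simp [descProd, List.Ico.eq_cons hj]

/-- The subgroup generated by `z` and `t 0, …, t (m - 1)`. -/
def spinSubgroup {G : Type*} [Group G] (t : ℕ → G) (z : G) (m : ℕ) : Subgroup G :=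
  Subgroup.closure (insert z (t '' Set.Iio m))

section Kernel

variable {G : Type*} [Group G] {t : ℕ → G} {z : G} {m : ℕ}

theorem mem_spinSubgroup_z : z ∈ spinSubgroup t z m :=
  Subgroup.subset_closure (Set.mem_insert _ _)

theorem mem_spinSubgroup_of_lt {k : ℕ} (hk : k < m) : t k ∈ spinSubgroup t z m :=
  Subgroup.subset_closure (Set.mem_insert_of_mem _ ⟨k, hk, rfl⟩)

namespace IsSpinFamily

theorem descProd_mul_z (h : IsSpinFamily t z m) (j : ℕ) :
    descProd t m j * z = z * descProd t m j := by
  refine (Commute.list_prod_right _ _ fun x hx => ?_).symm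
  obtain ⟨i, hi, rfl⟩ := List.mem_map.1 hx
  exact h.commute_z (List.Ico.mem.1 (List.mem_reverse.1 hi)).2

theorem descProd_mul_of_succ (h : IsSpinFamily t z m) {j : ℕ} (hj : j < m) {x g : G}
    (hx : t j * x = z * x * t j) (hg : descProd t m (j + 1) * x = g * descProd t m (j + 1)) :
    descProd t m j * x = z * g * descProd t m j := by
  rw [descProd_of_lt t hj]
  calc descProd t m (j + 1) * t j * x = descProd t m (j + 1) * z * x * t j := by
        rw [mul_assoc, hx]; simp only [mul_assoc]
    _ = z * (descProd t m (j + 1) * x) * t j := by rw [h.descProd_mul_z]; simp only [mul_assoc]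
    _ = z * g * (descProd t m (j + 1) * t j) := by rw [hg]; simp only [mul_assoc]

theorem exists_descProd_mul_of_lt (h : IsSpinFamily t z (m + 1)) {j k : ℕ} (hkj : k + 1 < j)
    (hj : j ≤ m + 1) :
    ∃ g ∈ spinSubgroup t z m, descProd t (m + 1) j * t k = g * descProd t (m + 1) j := by
  induction hj using Nat.decreasingInduction with
  | self => exact ⟨t k, mem_spinSubgroup_of_lt (by omega), by rw [descProd_self, one_mul, mul_one]⟩
  | of_succ j hj ih =>
    obtain ⟨g, hg, ih⟩ := ih (by omega)
    exact ⟨z * g, mul_mem mem_spinSubgroup_z hg,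
      h.descProd_mul_of_succ hj (h.anticomm' hkj hj) ih⟩

theorem exists_descProd_mul_of_gt (h : IsSpinFamily t z (m + 1)) {j k : ℕ} (hjk : j < k)
    (hk : k ≤ m) :
    ∃ g ∈ spinSubgroup t z m, descProd t (m + 1) j * t k = g * descProd t (m + 1) j := by
  obtain ⟨k, rfl⟩ := Nat.exists_eq_add_one_of_ne_zero (show k ≠ 0 by omega)
  induction (show j ≤ k by omega) using Nat.decreasingInduction with
  | self =>
    obtain ⟨g, hg, hw⟩ := h.exists_descProd_mul_of_lt (lt_add_one (k + 1)) (by omega)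
    refine ⟨g, hg, ?_⟩
    rw [descProd_of_lt t (show k < m + 1 by omega), descProd_of_lt t (show k + 1 < m + 1 by omega)]
    set w := descProd t (m + 1) (k + 1 + 1)
    calc w * t (k + 1) * t k * t (k + 1) = w * (t (k + 1) * t k * t (k + 1)) := by
          simp only [mul_assoc]
      _ = w * t k * t (k + 1) * t k := by rw [← h.braid k (by omega)]; simp only [mul_assoc]
      _ = g * (w * t (k + 1) * t k) := by rw [hw]; simp only [mul_assoc]
  | of_succ j hj ih =>
    obtain ⟨g, hg, ih⟩ := ih (by omega)
    exact ⟨z * g, mul_mem mem_spinSubgroup_z hg,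
      h.descProd_mul_of_succ (by omega) (h.anticomm j (k + 1) (by omega) (by omega)) ih⟩

/-- Hence the products `descProd t (m + 1) j` with `j ≤ m + 1` represent all right cosets of
`spinSubgroup t z m` in `spinSubgroup t z (m + 1)`. -/
theorem exists_descProd_mul (h : IsSpinFamily t z (m + 1)) {j k : ℕ} (hj : j ≤ m + 1)
    (hk : k ≤ m) :
    ∃ g ∈ spinSubgroup t z m,
      descProd t (m + 1) j * t k = g * descProd t (m + 1) (swap k (k + 1) j) := by
  rcases lt_trichotomy j k with hjk | rfl | hkj
  · rw [swap_apply_of_ne_of_ne (by omega) (by omega)]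
    exact h.exists_descProd_mul_of_gt hjk hk
  · refine ⟨z, mem_spinSubgroup_z, ?_⟩
    rw [swap_apply_left, descProd_of_lt t (by omega), mul_assoc, h.mul_self j (by omega),
      h.descProd_mul_z]
  · rcases (Nat.succ_le_of_lt hkj).eq_or_lt with rfl | hkj
    · exact ⟨1, one_mem _, by rw [swap_apply_right, descProd_of_lt t (j := k) (by omega), one_mul]⟩
    · rw [swap_apply_of_ne_of_ne (by omega) (by omega)]
      exact h.exists_descProd_mul_of_lt hkj hj

theorem pow_four_eq_one (h : IsSpinFamily t z m) {y : G} (hy : y ∈ insert z (t '' Set.Iio m)) :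
    y ^ 4 = 1 := by
  rw [show 4 = 2 * 2 from rfl, pow_mul]
  rcases hy with rfl | ⟨k, hk, rfl⟩
  · rw [pow_two y, h.z_mul_self, one_pow]
  · rw [pow_two (t k), h.mul_self k hk, pow_two, h.z_mul_self]

theorem exists_eq_mul_descProd (h : IsSpinFamily t z (m + 1)) {p : G →* Perm ℕ}
    (hp : ∀ k < m + 1, p (t k) = swap k (k + 1)) (hpz : p z = 1) {x : G}
    (hx : x ∈ spinSubgroup t z (m + 1)) :
    ∃ j ≤ m + 1, p x j = m + 1 ∧ ∃ g ∈ spinSubgroup t z m, x = g * descProd t (m + 1) j := by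
  have step (x y : G) (hy : y ∈ insert z (t '' Set.Iio (m + 1)))
      (hx : ∃ j ≤ m + 1, p x j = m + 1 ∧
        ∃ g ∈ spinSubgroup t z m, x = g * descProd t (m + 1) j) :
      ∃ j ≤ m + 1, p (x * y) j = m + 1 ∧
        ∃ g ∈ spinSubgroup t z m, x * y = g * descProd t (m + 1) j := by
    obtain ⟨j, hj, hpj, g, hg, rfl⟩ := hx
    rcases hy with rfl | ⟨k, hk, rfl⟩
    · refine ⟨j, hj, by rwa [map_mul, hpz, mul_one], g * y, mul_mem hg mem_spinSubgroup_z, ?_⟩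
      rw [mul_assoc, h.descProd_mul_z, mul_assoc]
    · have hk : k < m + 1 := hk
      obtain ⟨g', hg', hw⟩ := h.exists_descProd_mul hj (Nat.le_of_lt_succ hk)
      refine ⟨swap k (k + 1) j, ?_, ?_, g * g', mul_mem hg hg', by rw [mul_assoc, hw, mul_assoc]⟩
      · rw [swap_apply_def]
        split_ifs <;> omega
      · rw [map_mul, hp k hk, Perm.mul_apply, swap_apply_self, hpj]
  induction hx using Subgroup.closure_induction_right with
  | one => exact ⟨m + 1, le_rfl, by simp, 1, one_mem _, by rw [descProd_self, one_mul]⟩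
  | mul_right x _ y hy ih => exact step x y hy ih
  | mul_inv_cancel x _ y hy ih =>
    have hinv : y⁻¹ = y * y * y := inv_eq_of_mul_eq_one_left <| by
      simpa only [pow_succ, pow_zero, one_mul] using h.pow_four_eq_one hy
    rw [hinv, ← mul_assoc, ← mul_assoc]
    exact step _ y hy (step _ y hy (step x y hy ih))

theorem eq_one_or_eq_of_map_eq_one (h : IsSpinFamily t z m) {p : G →* Perm ℕ}
    (hp : ∀ k < m, p (t k) = swap k (k + 1)) (hpz : p z = 1) {x : G}
    (hx : x ∈ spinSubgroup t z m) (hpx : p x = 1) : x = 1 ∨ x = z := by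
  induction m generalizing x with
  | zero =>
    rw [spinSubgroup, ← bot_eq_zero, Set.Iio_bot, Set.image_empty, insert_empty_eq,
      ← Subgroup.zpowers_eq_closure] at hx
    obtain ⟨k, rfl⟩ := Subgroup.mem_zpowers_iff.1 hx
    have hz : z ^ (2 : ℤ) = 1 := by rw [zpow_two, h.z_mul_self]
    rcases Int.even_or_odd' k with ⟨l, rfl | rfl⟩
    · exact Or.inl (by rw [zpow_mul, hz, one_zpow])
    · exact Or.inr (by rw [zpow_add, zpow_mul, hz, one_zpow, one_mul, zpow_one])
  | succ m ih =>
    obtain ⟨j, -, hpj, g, hg, rfl⟩ := h.exists_eq_mul_descProd hp hpz hx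
    obtain rfl : j = m + 1 := by rwa [hpx] at hpj
    rw [descProd_self, mul_one] at hpx ⊢
    exact ih (h.mono m.le_succ) (fun k hk => hp k (by omega)) hg hpx

end IsSpinFamily

end Kernel

theorem isSpinFamily_swap (m : ℕ) : IsSpinFamily (fun k => swap k (k + 1)) 1 m where
  z_mul_self := one_mul 1
  mul_self i _ := swap_mul_self i (i + 1)
  anticomm i j hij _ := by
    rw [one_mul]
    exact (Perm.disjoint_swap_swap (by simp; omega)).commute
  braid i _ := by
    rw [swap_mul_swap_mul_swap (by omega) (by omega), swap_comm i (i + 1),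
      swap_comm (i + 1) (i + 1 + 1), swap_mul_swap_mul_swap (by omega) (by omega), swap_comm]

/-- The projection `S̃ₙ → Sₙ`. Here `Sₙ` is the group of permutations of `ℕ` that fix every `k ≥ n`,
so that shifting an index needs no cast between the types `Fin n`. -/
def proj (n : ℕ) : SpinSym n →* Perm ℕ := (isSpinFamily_swap (n - 1)).lift

theorem proj_zt (n : ℕ) : proj n (zt n) = 1 := (isSpinFamily_swap (n - 1)).lift_zt

theorem proj_ttN {n k : ℕ} (hk : k < n - 1) : proj n (ttN n k) = swap k (k + 1) :=
  (isSpinFamily_swap (n - 1)).lift_ttN hk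

theorem mem_spinSubgroup_ttN (n : ℕ) (g : SpinSym n) : g ∈ spinSubgroup (ttN n) (zt n) (n - 1) :=
  mem_of_zt_mem_of_ttN_mem mem_spinSubgroup_z (fun _ => mem_spinSubgroup_of_lt) g

theorem eq_or_eq_zt_mul_of_proj_eq {n : ℕ} {g h : SpinSym n} (hgh : proj n g = proj n h) :
    g = h ∨ g = zt n * h := by
  rw [← mul_inv_eq_one, ← mul_inv_eq_iff_eq_mul]
  exact (isSpinFamily_ttN n).eq_one_or_eq_of_map_eq_one (fun k hk => proj_ttN hk) (proj_zt n)
    (mem_spinSubgroup_ttN n _) (by rw [map_mul, map_inv, hgh, mul_inv_cancel])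

/-! ### Lifted transpositions -/

theorem ttilCore_self (n i : ℕ) : ttilCore n i i = 1 := by simp [ttilCore]

theorem ttilCore_succ (n i : ℕ) : ttilCore n i (i + 1) = ttN n i := by simp [ttilCore]

theorem ttilCore_of_lt (n : ℕ) {i j : ℕ} (hij : i < j) :
    ttilCore n i (j + 1) = ttN n i * ttilCore n (i + 1) (j + 1) * ttN n i := by
  obtain ⟨d, rfl⟩ := Nat.exists_eq_add_of_lt hij
  simp only [ttilCore, show i + d + 1 + 1 - i = d + 1 + 1 by omega,
    show i + d + 1 + 1 - 1 - i = d + 1 by omega, show i + d + 1 + 1 - (i + 1) = d + 1 by omega,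
    show i + d + 1 + 1 - 1 - (i + 1) = d by omega, List.range'_succ (s := i)]
  simp [mul_assoc]

theorem ttilCore_mul_self {n i j : ℕ} (hij : i ≤ j) (hj : j < n - 1) :
    ttilCore n i (j + 1) * ttilCore n i (j + 1) = zt n := by
  have h := isSpinFamily_ttN n
  induction hij using Nat.decreasingInduction with
  | self => rw [ttilCore_succ, h.mul_self j hj]
  | of_succ i hij ih =>
    rw [ttilCore_of_lt n hij]
    have ha : ttN n i * ttN n i = zt n := h.mul_self i (by omega)
    set a := ttN n i
    set w := ttilCore n (i + 1) (j + 1)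
    calc a * w * a * (a * w * a) = a * w * (a * a) * w * a := by simp only [mul_assoc]
      _ = zt n * (a * (w * w) * a) := by
        rw [ha, ← (commute_zt n (a * w)).eq]; simp only [mul_assoc]
      _ = zt n * (zt n * (a * a)) := by
        rw [ih, ← (commute_zt n a).eq, mul_assoc (zt n) a]
      _ = zt n := by rw [ha, h.z_mul_self, mul_one]

theorem proj_ttilCore {n i j : ℕ} (hij : i ≤ j) (hj : j < n - 1) :
    proj n (ttilCore n i (j + 1)) = swap i (j + 1) := by
  induction hij using Nat.decreasingInduction with
  | self => rw [ttilCore_succ, proj_ttN hj]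
  | of_succ i hij ih =>
    rw [ttilCore_of_lt n hij, map_mul, map_mul, ih, proj_ttN (by omega), swap_comm i (i + 1),
      swap_comm (i + 1) (j + 1), swap_mul_swap_mul_swap (by omega) (by omega)]

theorem proj_ttil {n i j : ℕ} (hij : i ≤ j) (hj : j < n) : proj n (ttil n i j) = swap i j := by
  rw [ttil, if_neg (by omega)]
  rcases hij.eq_or_lt with rfl | hlt
  · rw [ttilCore_self, map_one, swap_self, Perm.one_def]
  · obtain ⟨j, rfl⟩ := Nat.exists_eq_add_one_of_ne_zero (show j ≠ 0 by omega)
    exact proj_ttilCore (by omega) (by omega)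

/-! ### The section and the cocycle -/

theorem exists_prod_map_swap_eq {α : Type*} [LinearOrder α] {l : List α} (hl : l.SortedLT)
    {x : Perm α} (hx : ∀ k ∉ l, x k = k) :
    ∃ i : α → α, (∀ k, i k ≤ k) ∧ x = (l.map fun k => swap (i k) k).prod := by
  induction l using List.reverseRecOn generalizing x with
  | nil => exact ⟨id, fun _ => le_rfl, Perm.ext fun k => by simpa using hx k⟩
  | append_singleton l b ih =>
    obtain ⟨hl, -, hlb⟩ := List.pairwise_append.1 hl.pairwise
    have hlb : ∀ a ∈ l, a < b := by simpa using hlb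
    have hxb : x (x⁻¹ b) = b := x.apply_symm_apply b
    have hle : x⁻¹ b ≤ b := by
      by_cases hmem : x⁻¹ b ∈ l
      · exact (hlb _ hmem).le
      · by_contra! hlt
        have hnot : x⁻¹ b ∉ l ++ [b] := by
          rw [List.mem_append, List.mem_singleton]
          exact not_or_intro hmem hlt.ne'
        exact hlt.ne' ((hx _ hnot).symm.trans hxb)
    obtain ⟨i, hi, hprod⟩ := ih hl.sortedLT (x := x * swap (x⁻¹ b) b) fun k hk => by
      rcases eq_or_ne k b with rfl | hkb
      · rw [Perm.mul_apply, swap_apply_right, hxb]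
      · have hxk : x k = k := hx k (by simp [hk, hkb])
        have hne : k ≠ x⁻¹ b := fun h => hkb (by rw [← hxk, h, hxb])
        rw [Perm.mul_apply, swap_apply_of_ne_of_ne hne hkb, hxk]
    refine ⟨Function.update i b (x⁻¹ b), fun k => ?_, ?_⟩
    · rcases eq_or_ne k b with rfl | hkb
      · rwa [Function.update_self]
      · rw [Function.update_of_ne hkb]
        exact hi k
    · have hcongr : l.map (fun k => swap (Function.update i b (x⁻¹ b) k) k) =
          l.map fun k => swap (i k) k :=
        List.map_congr_left fun k hk => by rw [Function.update_of_ne (hlb k hk).ne]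
      rw [List.map_append, List.prod_append, hcongr, ← hprod, List.map_singleton,
        List.prod_singleton, Function.update_self, mul_assoc, swap_mul_self, mul_one]

theorem exists_isFactorization (n : ℕ) (x : Perm (Fin n)) : ∃ i, IsFactorization n x i :=
  exists_prod_map_swap_eq (List.sortedLT_finRange n) fun k hk => absurd (List.mem_finRange k) hk

theorem viaEmbeddingHom_swap {α β : Type*} [DecidableEq α] [DecidableEq β] (ι : α ↪ β) (a b : α) :
    Perm.viaEmbeddingHom ι (swap a b) = swap (ι a) (ι b) := by
  ext y
  rw [Perm.viaEmbeddingHom_apply]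
  by_cases hy : y ∈ Set.range ι
  · obtain ⟨x, rfl⟩ := hy
    rw [Perm.viaEmbedding_apply, ι.injective.swap_apply]
  · rw [Perm.viaEmbedding_apply_of_notMem _ _ _ hy,
      swap_apply_of_ne_of_ne (fun h => hy ⟨a, h.symm⟩) fun h => hy ⟨b, h.symm⟩]

theorem proj_sec (n : ℕ) (x : Perm (Fin n)) :
    proj n (sec n x) = Perm.viaEmbeddingHom Fin.valEmbedding x := by
  have h := exists_isFactorization n x
  conv_rhs => rw [h.choose_spec.2]
  rw [sec, dif_pos h, map_list_prod, map_list_prod, List.map_map, List.map_map]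
  refine congrArg List.prod (List.map_congr_left fun k _ => ?_)
  exact (proj_ttil (h.choose_spec.1 k) k.2).trans (viaEmbeddingHom_swap Fin.valEmbedding _ k).symm

theorem sec_mul_sec (n : ℕ) (x y : Perm (Fin n)) :
    sec n x * sec n y = zt n ^ (coc n x y).val * sec n (x * y) := by
  rcases eq_or_eq_zt_mul_of_proj_eq (g := sec n x * sec n y) (h := sec n (x * y))
    (by simp only [map_mul, proj_sec]) with h | h
  · rw [coc, if_pos h, ZMod.val_zero, pow_zero, one_mul, h]
  · have hne : sec n x * sec n y ≠ sec n (x * y) := by simpa [h] using zt_ne_one n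
    rw [coc, if_neg hne, ZMod.val_one, pow_one, h]

theorem sec_swap_mul_self {n : ℕ} {i j : Fin n} (hij : i ≠ j) :
    sec n (swap i j) * sec n (swap i j) = zt n := by
  wlog hlt : i < j generalizing i j
  · rw [swap_comm]
    exact this hij.symm (hij.symm.lt_of_le (not_lt.1 hlt))
  obtain ⟨k, hk⟩ := Nat.exists_eq_add_one_of_ne_zero (show (j : ℕ) ≠ 0 by omega)
  have hsq : ttilCore n i (k + 1) * ttilCore n i (k + 1) = zt n :=
    ttilCore_mul_self (by omega) (by omega)
  have hproj : proj n (sec n (swap i j)) = proj n (ttilCore n i (k + 1)) := by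
    rw [proj_sec, viaEmbeddingHom_swap, proj_ttilCore (by omega) (by omega), ← hk]
    rfl
  rcases eq_or_eq_zt_mul_of_proj_eq hproj with h | h
  · rw [h, hsq]
  · rw [h, (commute_zt n _).symm.mul_mul_mul_comm, hsq, (isSpinFamily_ttN n).z_mul_self, one_mul]

theorem zt_pow_val_mul_zt_pow_val_eq_zt_iff (n : ℕ) (a b : ZMod 2) :
    zt n ^ a.val * zt n ^ b.val = zt n ↔ a + b = 1 := by
  conv_lhs => rhs; rw [← pow_one (zt n)]
  rw [← pow_add, pow_eq_pow_iff_modEq, orderOf_zt, ← ZMod.natCast_eq_natCast_iff]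
  push_cast [ZMod.natCast_zmod_val]
  rfl

theorem cocycle_annulus_rule (n : ℕ) (hn : 2 ≤ n) (i j : Fin n) (hij : i ≠ j)
    (x : Equiv.Perm (Fin n)) :
    coc n (Equiv.swap i j) x + coc n (Equiv.swap i j) (Equiv.swap i j * x) = 1 := by
  set σ := swap i j
  have hσ : σ * (σ * x) = x := swap_mul_self_mul i j x
  rw [← zt_pow_val_mul_zt_pow_val_eq_zt_iff n]
  apply mul_right_cancel (b := sec n x)
  calc zt n ^ (coc n σ x).val * zt n ^ (coc n σ (σ * x)).val * sec n x
      = zt n ^ (coc n σ x).val * (sec n σ * sec n (σ * x)) := by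
        rw [sec_mul_sec n σ (σ * x), hσ, mul_assoc]
    _ = sec n σ * (zt n ^ (coc n σ x).val * sec n (σ * x)) :=
        ((commute_zt n _).pow_left _).left_comm _
    _ = sec n σ * sec n σ * sec n x := by rw [← sec_mul_sec, mul_assoc]
    _ = zt n * sec n x := by rw [sec_swap_mul_self hij]
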